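/- For every affine map f from the 6-dimensional simplex on 7 vertices to R^2, where the 7 vertices are colored with color classes A = {a1,a2}, B = {b1,b2}, C = {c1,c2}, D = {d}, there exist four rainbow subsets Δ1, Δ2, Δ3, Δ4 of the vertex set (each containing at most one vertex of each color) such that the convex hulls of the four images f(Δ1), ..., f(Δ4) have a common point, each of a1, b1, c1, d appears in exactly one of the Δi, and each of a2, b2, c2 appears in exactly two of the Δi. -/

import Mathlib

open scoped Classical

/-- Vertices `0,1` have color `A`, `2,3` color `B`, `4,5` color `C`, `6` color `D`.
`a1 = 0, a2 = 1, b1 = 2, b2 = 3, c1 = 4, c2 = 5, d = 6`. -/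
def colorClass7 : Fin 4 → Finset (Fin 7)
  | 0 => {0, 1}
  | 1 => {2, 3}
  | 2 => {4, 5}
  | 3 => {6}

/-!
If `a₂, b₂, c₂` are affinely dependent, a Radon partition of them suffices: two faces contain one
side and two the other. Otherwise they form an affine basis. Give `a₁, b₁, c₁, d` the weights
`z⁺` in one face and `z⁻` in a second one, for some `z : ℝ⁴`, and let `P z⁺` and `P z⁻` be the
coefficients of the two weighted sums in that basis. Cancel the negative coefficients by putting
weights `(P z⁺)⁻` and `(P z⁻)⁻` on the basis points, and put weights `(P z⁺)⁺` on the basis points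
in the other two faces. This has the required form as soon as, at each basis point, `(P z⁺)⁺`
equals `(P z⁻)⁺` and a weight of the single vertex of the same colour does not meet a negative
coefficient in the same face. Multiplying the negative parts by `z⁺` and `z⁻` turns these
conditions into the zeros of a single odd map `ℝ⁴ → ℝ³`, and the Borsuk–Ulam theorem applies.

The Borsuk–Ulam theorem comes from a parity count modulo 2. Labels that differ at antipodal points
define a cochain (the product of their coboundaries) whose value on a hemisphere of the
cross-polytope is odd, also after barycentric subdivision. So arbitrarily small simplices exist on
which no label is constant, and these accumulate at a common boundary point of all label regions.
-/

namespace ColoredTverberg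

section Cochains

variable {E : Type*}

/-- Ordered simplicial cochains modulo 2. A word stands for the ordered simplex with these
vertices (possibly degenerate), and cochains of all degrees are kept in one function: degree `k`
is the restriction to words of length `k + 1`. -/
abbrev Cochain (E : Type*) : Type _ := List E → ZMod 2

/-- The restriction of a cochain to the simplices obtained by joining with `v`. -/
def link (v : E) : Module.End (ZMod 2) (Cochain E) :=
  LinearMap.funLeft (ZMod 2) (ZMod 2) (List.cons v)

@[simp] lemma link_apply (v : E) (φ : Cochain E) (w : List E) : link v φ w = φ (v :: w) := rfl

/-- The boundary of an ordered simplex, as a functional on cochains. -/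
def boundary : List E → Module.Dual (ZMod 2) (Cochain E)
  | [] => 0
  | v :: w => LinearMap.proj w + boundary w ∘ₗ link v

/-- The simplicial coboundary operator. -/
def coboundary : Module.End (ZMod 2) (Cochain E) := LinearMap.pi boundary

@[simp] lemma coboundary_nil (φ : Cochain E) : coboundary φ [] = 0 := rfl

@[simp] lemma coboundary_cons (φ : Cochain E) (v : E) (w : List E) :
    coboundary φ (v :: w) = φ w + coboundary (link v φ) w := rfl

lemma link_coboundary (v : E) (φ : Cochain E) :
    link v (coboundary φ) = φ + coboundary (link v φ) := rfl

lemma coboundary_congr {φ ψ : Cochain E} {w : List E}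
    (h : ∀ u, u.Sublist w → u.length + 1 = w.length → φ u = ψ u) :
    coboundary φ w = coboundary ψ w := by
  induction w generalizing φ ψ with
  | nil => rfl
  | cons v w ih =>
    rw [coboundary_cons, coboundary_cons, h w (List.sublist_cons_self v w) rfl]
    exact congrArg _ (ih fun u hu hlen => h _ (hu.cons_cons v) (by simp [hlen]))

lemma coboundary_coboundary (φ : Cochain E) : coboundary (coboundary φ) = 0 := by
  funext w
  induction w generalizing φ with
  | nil => rfl
  | cons v w ih =>
    rw [coboundary_cons, link_coboundary, map_add, Pi.add_apply, ih, ← add_assoc,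
      CharTwo.add_self_eq_zero, Pi.zero_apply, Pi.zero_apply, add_zero]

/-- The cup product of the `0`-cochain `s` with `φ`. -/
def cup (s : E → ZMod 2) (φ : Cochain E) : Cochain E
  | [] => 0
  | v :: w => s v * φ (v :: w)

lemma coboundary_cup (s : E → ZMod 2) (φ : Cochain E) (a b : E) (w : List E) :
    coboundary (cup s φ) (a :: b :: w) =
      (s a + s b) * φ (b :: w) + s a * coboundary φ (a :: b :: w) := by
  have link_cup : link a (cup s φ) = s a • link a φ := rfl
  rw [coboundary_cons, link_cup, map_smul, Pi.smul_apply, smul_eq_mul, coboundary_cons φ]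
  change s b * φ (b :: w) + _ = _
  linear_combination -(s a * φ (b :: w)) * CharTwo.two_eq_zero (R := ZMod 2)

/-- The product of the coboundaries of the labels `ss`, one label for each edge of the word
`v₀ v₁ ⋯ vₙ`: on words with one letter more than there are labels, its value is
`∏ i, (sᵢ vᵢ + sᵢ vᵢ₊₁)`. -/
def labelCochain : List (E → ZMod 2) → Cochain E
  | [] => 1
  | s :: ss => coboundary (cup s (labelCochain ss))

lemma coboundary_labelCochain (ss : List (E → ZMod 2)) {w : List E}
    (hw : w.length = ss.length + 2) : coboundary (labelCochain ss) w = 0 := by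
  cases ss with
  | nil =>
    obtain ⟨a, b, rfl⟩ := List.length_eq_two.1 hw
    simp [labelCochain, CharTwo.add_self_eq_zero]
  | cons s ss => rw [labelCochain, coboundary_coboundary, Pi.zero_apply]

lemma labelCochain_eq_zero {ss : List (E → ZMod 2)} {s : E → ZMod 2} (hs : s ∈ ss) {w : List E}
    (hw : w.length = ss.length + 1) (hconst : ∀ x ∈ w, ∀ y ∈ w, s x = s y) :
    labelCochain ss w = 0 := by
  induction ss generalizing w with
  | nil => simp at hs
  | cons t ss ih =>
    obtain _ | ⟨a, _ | ⟨b, w⟩⟩ := w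
    · simp at hw
    · simp at hw
    rw [labelCochain, coboundary_cup, coboundary_labelCochain ss (by simpa using hw), mul_zero,
      add_zero]
    rcases List.mem_cons.1 hs with rfl | hs
    · rw [hconst a (by simp) b (by simp), CharTwo.add_self_eq_zero, zero_mul]
    · rw [ih hs (by simpa using hw) fun x hx y hy =>
        hconst x (List.mem_cons_of_mem a hx) y (List.mem_cons_of_mem a hy), mul_zero]

variable [AddCommGroup E]

/-- The pull-back of cochains along the antipodal map. -/
def antipode : Module.End (ZMod 2) (Cochain E) :=
  LinearMap.funLeft (ZMod 2) (ZMod 2) (List.map Neg.neg)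

@[simp] lemma antipode_apply (φ : Cochain E) (w : List E) :
    antipode φ w = φ (w.map Neg.neg) := rfl

lemma link_antipode (v : E) (φ : Cochain E) :
    link v (antipode φ) = antipode (link (-v) φ) := rfl

lemma commute_antipode_coboundary : Commute (antipode (E := E)) coboundary := by
  ext φ w
  change coboundary φ (w.map Neg.neg) = coboundary (antipode φ) w
  induction w generalizing φ with
  | nil => rfl
  | cons v w ih => rw [List.map_cons, coboundary_cons, ih]; rfl

lemma antipode_coboundary (φ : Cochain E) :
    antipode (coboundary φ) = coboundary (antipode φ) :=
  LinearMap.congr_fun commute_antipode_coboundary φ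

variable {ss : List (E → ZMod 2)} {s : E → ZMod 2} {w : List E}

lemma antipode_cup {φ : Cochain E} (hs : ∀ z ≠ 0, s (-z) = s z + 1) (hw : w ≠ []) (h0 : 0 ∉ w)
    (hφ : antipode φ w = φ w) : antipode (cup s φ) w = cup s φ w + φ w := by
  obtain ⟨a, w, rfl⟩ := List.exists_cons_of_ne_nil hw
  have ha : a ≠ 0 := fun h => h0 (h ▸ List.mem_cons_self)
  change s (-a) * antipode φ (a :: w) = s a * φ (a :: w) + φ (a :: w)
  rw [hs a ha, hφ, add_one_mul]

lemma antipode_labelCochain (hodd : ∀ s ∈ ss, ∀ z ≠ 0, s (-z) = s z + 1)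
    (hw : w.length = ss.length + 1) (h0 : 0 ∉ w) :
    antipode (labelCochain ss) w = labelCochain ss w := by
  induction ss generalizing w with
  | nil => rfl
  | cons s ss ih =>
    have hcup : ∀ u, u.Sublist w → u.length + 1 = w.length →
        antipode (cup s (labelCochain ss)) u =
          (cup s (labelCochain ss) + labelCochain ss) u := fun u hu hlen =>
      have hu_len : u.length = ss.length + 1 := by simpa [hw] using hlen
      antipode_cup (hodd s List.mem_cons_self) (List.ne_nil_of_length_eq_add_one hu_len)
        (fun h => h0 (hu.subset h))
        (ih (fun t ht => hodd t (List.mem_cons_of_mem s ht)) hu_len fun h => h0 (hu.subset h))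
    rw [labelCochain, antipode_coboundary, coboundary_congr hcup, map_add, Pi.add_apply,
      coboundary_labelCochain ss (by simpa using hw), add_zero]

/-- All words obtained from `vs` by choosing a sign for each letter: the facets of the
cross-polytope with vertices `±v`. -/
def signings : List E → List (List E)
  | [] => [[]]
  | v :: vs => (signings vs).map (List.cons v) ++ (signings vs).map (List.cons (-v))

/-- The evaluation of cochains on the boundary sphere of the cross-polytope over `vs`. -/
def sphereSum (vs : List E) (φ : Cochain E) : ZMod 2 := ((signings vs).map φ).sum

lemma sphereSum_cons (v : E) (vs : List E) (φ : Cochain E) :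
    sphereSum (v :: vs) φ = sphereSum vs (link v φ) + sphereSum vs (link (-v) φ) := by
  simp only [sphereSum, signings, List.map_append, List.map_map, List.sum_append]
  rfl

lemma sphereSum_add (vs : List E) (φ ψ : Cochain E) :
    sphereSum vs (φ + ψ) = sphereSum vs φ + sphereSum vs ψ :=
  List.sum_map_add

lemma sphereSum_congr {vs : List E} {φ ψ : Cochain E} (h : ∀ w ∈ signings vs, φ w = ψ w) :
    sphereSum vs φ = sphereSum vs ψ :=
  congrArg List.sum (List.map_congr_left h)

lemma sphereSum_antipode (vs : List E) (φ : Cochain E) :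
    sphereSum vs (antipode φ) = sphereSum vs φ := by
  induction vs generalizing φ with
  | nil => rfl
  | cons v vs ih =>
    rw [sphereSum_cons, sphereSum_cons, link_antipode, link_antipode, ih, ih, neg_neg, add_comm]

lemma sphereSum_coboundary (vs : List E) (φ : Cochain E) : sphereSum vs (coboundary φ) = 0 := by
  induction vs generalizing φ with
  | nil => rfl
  | cons v vs ih =>
    rw [sphereSum_cons, link_coboundary, link_coboundary, sphereSum_add, sphereSum_add, ih, ih,
      add_zero, CharTwo.add_self_eq_zero]

lemma length_of_mem_signings {vs : List E} (hw : w ∈ signings vs) : w.length = vs.length := by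
  induction vs generalizing w with
  | nil => simp_all [signings]
  | cons v vs ih =>
    simp only [signings, List.mem_append, List.mem_map] at hw
    obtain ⟨u, hu, rfl⟩ | ⟨u, hu, rfl⟩ := hw <;> simp [ih hu]

lemma cons_mem_signings {vs : List E} (v : E) (hw : w ∈ signings vs) :
    v :: w ∈ signings (v :: vs) := by
  simp [signings, hw]

/-- The evaluation of cochains on the half of the sphere over `v :: vs` that contains `v`. -/
def hemisphereSum (v : E) (vs : List E) (φ : Cochain E) : ZMod 2 := sphereSum vs (link v φ)

lemma hemisphereSum_coboundary (v : E) (vs : List E) (φ : Cochain E) :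
    hemisphereSum v vs (coboundary φ) = sphereSum vs φ := by
  rw [hemisphereSum, link_coboundary, sphereSum_add, sphereSum_coboundary, add_zero]

lemma sphereSum_cons_eq_hemisphereSum (v : E) (vs : List E) (φ : Cochain E) :
    sphereSum (v :: vs) φ = hemisphereSum v vs (φ + antipode φ) := by
  rw [sphereSum_cons, hemisphereSum, map_add, sphereSum_add, link_antipode, sphereSum_antipode]

lemma hemisphereSum_congr {v : E} {vs : List E} {φ ψ : Cochain E}
    (h : ∀ w ∈ signings (v :: vs), φ w = ψ w) : hemisphereSum v vs φ = hemisphereSum v vs ψ :=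
  sphereSum_congr fun _ hw => h _ (cons_mem_signings v hw)

end Cochains

section Subdivision

variable {E : Type*}

/-- The set of vertices of an ordered simplex. -/
def vertices (w : List E) : Set E := {x | x ∈ w}

lemma finite_vertices (w : List E) : (vertices w).Finite := List.finite_toSet w

/-- The barycentre of the letters of a word, with multiplicity. -/
noncomputable def barycentre [AddCommGroup E] [Module ℝ E] (w : List E) : E :=
  (w.length : ℝ)⁻¹ • w.sum

section Algebra

variable [AddCommGroup E] [Module ℝ E]

@[simp] lemma barycentre_singleton (v : E) : barycentre [v] = v := by
  simp [barycentre]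

lemma barycentre_map_neg (w : List E) : barycentre (w.map Neg.neg) = -barycentre w := by
  rw [barycentre, barycentre, List.length_map, ← List.sum_neg, smul_neg]

/-- The barycentric subdivision of an ordered simplex with `n` vertices, as a functional on
cochains: the cone from the barycentre over the subdivided boundary. -/
noncomputable def subdivision : ℕ → List E → Module.Dual (ZMod 2) (Cochain E)
  | 0, _ => LinearMap.proj []
  | n + 1, w => boundary w ∘ₗ LinearMap.pi (subdivision n) ∘ₗ link (barycentre w)

/-- The pull-back of cochains along barycentric subdivision. It is meaningful on words of
length `n`. -/
noncomputable def subdivide (n : ℕ) : Module.End (ZMod 2) (Cochain E) :=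
  LinearMap.pi (subdivision n)

lemma subdivide_zero (φ : Cochain E) (w : List E) : subdivide 0 φ w = φ [] := rfl

lemma subdivide_succ (n : ℕ) (φ : Cochain E) (w : List E) :
    subdivide (n + 1) φ w = coboundary (subdivide n (link (barycentre w) φ)) w := rfl

lemma subdivide_coboundary (n : ℕ) (φ : Cochain E) :
    subdivide (n + 1) (coboundary φ) = coboundary (subdivide n φ) := by
  have cone_boundary : ∀ n (φ : Cochain E) w, subdivide (n + 1) (coboundary φ) w =
      coboundary (subdivide n φ) w +
        coboundary (subdivide n (coboundary (link (barycentre w) φ))) w := fun n φ w => by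
    rw [subdivide_succ, link_coboundary, map_add, map_add, Pi.add_apply]
  induction n generalizing φ with
  | zero =>
    funext w
    have h0 : subdivide 0 (coboundary (link (barycentre w) φ)) = 0 := rfl
    rw [cone_boundary, h0, map_zero, Pi.zero_apply, add_zero]
  | succ n ih =>
    funext w
    rw [cone_boundary, ih, coboundary_coboundary, Pi.zero_apply, add_zero]

lemma semiconjBy_coboundary_subdivide (n : ℕ) :
    SemiconjBy (coboundary (E := E)) (subdivide n) (subdivide (n + 1)) :=
  LinearMap.ext fun φ => (subdivide_coboundary n φ).symm

lemma commute_antipode_subdivide (n : ℕ) : Commute (antipode (E := E)) (subdivide n) := by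
  refine LinearMap.ext fun φ => funext fun w => ?_
  change subdivide n φ (w.map Neg.neg) = subdivide n (antipode φ) w
  induction n generalizing φ w with
  | zero => rfl
  | succ n ih =>
    have hantipode : antipode (subdivide n (link (-barycentre w) φ)) =
        subdivide n (link (barycentre w) (antipode φ)) := funext fun u => ih _ u
    rw [subdivide_succ, subdivide_succ, barycentre_map_neg, ← hantipode, ← antipode_coboundary,
      antipode_apply]

lemma subdivide_pow_coboundary (n m : ℕ) (φ : Cochain E) :
    (subdivide (n + 1) ^ m) (coboundary φ) = coboundary ((subdivide n ^ m) φ) :=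
  (LinearMap.congr_fun ((semiconjBy_coboundary_subdivide n).pow_right m) φ).symm

lemma antipode_subdivide_pow (n m : ℕ) (φ : Cochain E) :
    antipode ((subdivide n ^ m) φ) = (subdivide n ^ m) (antipode φ) :=
  LinearMap.congr_fun ((commute_antipode_subdivide n).pow_right m) φ

lemma subdivide_one_pow_singleton (m : ℕ) (φ : Cochain E) (v : E) :
    (subdivide 1 ^ m) φ [v] = φ [v] := by
  induction m with
  | zero => rfl
  | succ m ih =>
    rw [pow_succ', Module.End.mul_apply, subdivide_succ, ← ih]
    simp [subdivide_zero]

lemma barycentre_mem_convexHull {w : List E} (hw : w ≠ []) :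
    barycentre w ∈ convexHull ℝ (vertices w) := by
  have hlen : (w.length : ℝ) ≠ 0 := by simpa using hw
  rw [barycentre, ← Fin.sum_univ_getElem, Finset.smul_sum]
  refine (convex_convexHull ℝ _).sum_mem (fun _ _ => by positivity) (by simp [hlen]) fun i _ => ?_
  exact subset_convexHull ℝ _ (List.getElem_mem i.2)

end Algebra

open Metric

variable [NormedAddCommGroup E]

lemma diam_vertices_cons_le {u : List E} {v : E} {D : ℝ} (hD : 0 ≤ D)
    (hv : ∀ x ∈ u, dist v x ≤ D) (hu : diam (vertices u) ≤ D) :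
    diam (vertices (v :: u)) ≤ D := by
  refine diam_le_of_forall_dist_le hD fun x hx y hy => ?_
  rcases List.mem_cons.1 hx with rfl | hx <;> rcases List.mem_cons.1 hy with hyv | hy
  · rwa [hyv, dist_self]
  · exact hv y hy
  · exact hyv ▸ dist_comm x v ▸ hv x hx
  · exact (dist_le_diam_of_mem (finite_vertices u).isBounded hx hy).trans hu

variable [NormedSpace ℝ E]

lemma dist_barycentre_le {w : List E} {v : E} (hv : v ∈ w) :
    dist v (barycentre w) ≤ (1 - (w.length : ℝ)⁻¹) * diam (vertices w) := by
  have hlen : 0 < (w.length : ℝ) := by exact_mod_cast List.length_pos_of_mem hv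
  have hdist : ∀ x ∈ w, dist v x ≤ diam (vertices w) := fun x hx =>
    dist_le_diam_of_mem (finite_vertices w).isBounded hv hx
  have hsum : (w.map (dist v)).sum ≤ (w.length - 1) * diam (vertices w) := by
    rw [← List.sum_map_erase _ hv, dist_self, zero_add]
    refine (List.sum_le_card_nsmul _ (diam (vertices w)) ?_).trans_eq ?_
    · simpa using fun x hx => hdist x (List.mem_of_mem_erase hx)
    · rw [List.length_map, List.length_erase_of_mem hv, nsmul_eq_mul,
        Nat.cast_pred (List.length_pos_of_mem hv)]
  have hcenter : v - barycentre w = (w.length : ℝ)⁻¹ • (w.map (v - ·)).sum := by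
    have hmap : (w.map (v - ·)).sum = (w.length : ℝ) • v - w.sum := by
      simpa [Nat.cast_smul_eq_nsmul] using
        Multiset.sum_map_sub (m := (w : Multiset E)) (f := fun _ => v) (g := id)
    rw [hmap, smul_sub, inv_smul_smul₀ hlen.ne', barycentre]
  have hnorm : ‖(w.map (v - ·)).sum‖ ≤ (w.map (dist v)).sum := by
    simpa [Function.comp_def, ← dist_eq_norm] using
      norm_multiset_sum_le (w.map (v - ·) : Multiset E)
  calc dist v (barycentre w) = (w.length : ℝ)⁻¹ * ‖(w.map (v - ·)).sum‖ := by
        rw [dist_eq_norm, hcenter, norm_smul, Real.norm_of_nonneg (by positivity)]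
    _ ≤ (w.length : ℝ)⁻¹ * ((w.length - 1) * diam (vertices w)) := by gcongr; exact hnorm.trans hsum
    _ = (1 - (w.length : ℝ)⁻¹) * diam (vertices w) := by field_simp

lemma subdivide_congr {n N : ℕ} (hn : n ≤ N) {φ ψ : Cochain E} {w : List E} (hw : w.length = n)
    (h : ∀ u, u.length = n → vertices u ⊆ convexHull ℝ (vertices w) →
      diam (vertices u) ≤ (1 - (N : ℝ)⁻¹) * diam (vertices w) → φ u = ψ u) :
    subdivide n φ w = subdivide n ψ w := by
  induction n generalizing φ ψ w with
  | zero =>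
    obtain rfl := List.length_eq_zero_iff.1 hw
    exact h [] rfl (subset_convexHull ℝ _) (by simp [vertices])
  | succ n ih =>
    have hratio : 1 - ((n + 1 : ℕ) : ℝ)⁻¹ ≤ 1 - (N : ℝ)⁻¹ := by gcongr
    have hratio_nonneg : 0 ≤ 1 - (N : ℝ)⁻¹ := sub_nonneg.2 (Nat.cast_inv_le_one N)
    have hball : convexHull ℝ (vertices w) ⊆
        closedBall (barycentre w) ((1 - (N : ℝ)⁻¹) * diam (vertices w)) :=
      convexHull_min (fun x hx => (hw ▸ dist_barycentre_le hx).trans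
        (mul_le_mul_of_nonneg_right hratio diam_nonneg)) (convex_closedBall _ _)
    refine coboundary_congr fun t ht htlen => ?_
    have htw : vertices t ⊆ vertices w := ht.subset
    refine ih (by lia) (by lia) fun u hu hut hudiam => h _ (by simp [hu]) ?_ ?_
    · rintro x (_ | ⟨_, hx⟩)
      · exact barycentre_mem_convexHull (List.ne_nil_of_length_eq_add_one hw)
      · exact convexHull_mono htw (hut hx)
    · refine diam_vertices_cons_le (mul_nonneg hratio_nonneg diam_nonneg) (fun x hx => ?_)
        (hudiam.trans ?_)
      · exact dist_comm x _ ▸ hball (convexHull_mono htw (hut hx))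
      · gcongr
        exact diam_mono htw (finite_vertices w).isBounded

lemma subdivide_pow_congr (n m : ℕ) {φ ψ : Cochain E} {w : List E} (hw : w.length = n)
    (h : ∀ u, u.length = n → vertices u ⊆ convexHull ℝ (vertices w) →
      diam (vertices u) ≤ (1 - (n : ℝ)⁻¹) ^ m * diam (vertices w) → φ u = ψ u) :
    (subdivide n ^ m) φ w = (subdivide n ^ m) ψ w := by
  induction m generalizing w with
  | zero => exact h w hw (subset_convexHull ℝ _) (by simp)
  | succ m ih =>
    rw [pow_succ', Module.End.mul_apply, Module.End.mul_apply]
    refine subdivide_congr le_rfl hw fun u hu huw hudiam => ih hu fun t ht htu htdiam => ?_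
    refine h t ht (htu.trans (convexHull_min huw (convex_convexHull ℝ _))) (htdiam.trans ?_)
    rw [pow_succ, mul_assoc]
    gcongr
    exact pow_nonneg (sub_nonneg.2 (Nat.cast_inv_le_one n)) m

end Subdivision

section BorsukUlam

open Metric

section NormedSpace

variable {E : Type*} [NormedAddCommGroup E] [NormedSpace ℝ E] {v : E} {vs w : List E}

/-- The boundary sphere of the cross-polytope with vertices `±v`, for `v` in `vs`. -/
def crossSphere (vs : List E) : Set E := ⋃ w ∈ signings vs, convexHull ℝ (vertices w)

lemma convexHull_subset_crossSphere (hw : w ∈ signings vs) :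
    convexHull ℝ (vertices w) ⊆ crossSphere vs :=
  Set.subset_iUnion₂ (s := fun w _ => convexHull ℝ (vertices w)) w hw

lemma crossSphere_subset_cons (v : E) (vs : List E) : crossSphere vs ⊆ crossSphere (v :: vs) :=
  Set.iUnion₂_subset fun _ hw => (convexHull_mono fun _ => List.mem_cons_of_mem v).trans
    (convexHull_subset_crossSphere (cons_mem_signings v hw))

lemma isCompact_crossSphere (vs : List E) : IsCompact (crossSphere vs) :=
  (signings vs).finite_toSet.isCompact_biUnion fun w _ => (finite_vertices w).isCompact_convexHull ℝ

lemma hemisphereSum_subdivide_pow_congr {n : ℕ} (hn : vs.length + 1 = n) (m : ℕ)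
    {φ ψ : Cochain E} (h : ∀ u, u.length = n → vertices u ⊆ crossSphere (v :: vs) →
      diam (vertices u) ≤ (1 - (n : ℝ)⁻¹) ^ m * diam (crossSphere (v :: vs)) → φ u = ψ u) :
    hemisphereSum v vs ((subdivide n ^ m) φ) = hemisphereSum v vs ((subdivide n ^ m) ψ) := by
  refine hemisphereSum_congr fun w hw => subdivide_pow_congr n m
    ((length_of_mem_signings hw).trans hn) fun u hu huw hudiam => ?_
  have hw_sphere := convexHull_subset_crossSphere hw
  refine h u hu (huw.trans hw_sphere) (hudiam.trans ?_)
  gcongr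
  · exact pow_nonneg (sub_nonneg.2 (Nat.cast_inv_le_one n)) m
  · exact diam_mono ((subset_convexHull ℝ _).trans hw_sphere)
      (isCompact_crossSphere _).isBounded

variable {ss : List (E → ZMod 2)}

lemma hemisphereSum_subdivide_labelCochain (hodd : ∀ s ∈ ss, ∀ z ≠ 0, s (-z) = s z + 1)
    (hlen : vs.length = ss.length) (h0 : 0 ∉ crossSphere (v :: vs)) (m : ℕ) :
    hemisphereSum v vs ((subdivide (ss.length + 1) ^ m) (labelCochain ss)) = 1 := by
  induction ss generalizing v vs with
  | nil =>
    obtain rfl := List.length_eq_zero_iff.1 hlen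
    simp [hemisphereSum, sphereSum, signings, subdivide_one_pow_singleton, labelCochain]
  | cons s ss ih =>
    obtain ⟨u, us, rfl⟩ := List.exists_cons_of_length_eq_add_one hlen
    have hlen' : us.length = ss.length := by simpa using hlen
    have h0' : 0 ∉ crossSphere (u :: us) := fun h => h0 (crossSphere_subset_cons v _ h)
    have hodd' : ∀ t ∈ ss, ∀ z ≠ 0, t (-z) = t z + 1 := fun t ht =>
      hodd t (List.mem_cons_of_mem s ht)
    rw [labelCochain, List.length_cons, subdivide_pow_coboundary, hemisphereSum_coboundary,
      sphereSum_cons_eq_hemisphereSum, antipode_subdivide_pow, ← map_add, ← ih hodd' hlen' h0']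
    refine hemisphereSum_subdivide_pow_congr (by rw [hlen']) m fun t ht ht_sphere _ => ?_
    have ht0 : 0 ∉ t := fun hmem => h0' (ht_sphere hmem)
    rw [Pi.add_apply, antipode_cup (hodd s List.mem_cons_self)
      (List.ne_nil_of_length_eq_add_one ht) ht0 (antipode_labelCochain hodd' ht ht0),
      CharTwo.add_cancel_left]

lemma exists_labelCochain_ne_zero (hodd : ∀ s ∈ ss, ∀ z ≠ 0, s (-z) = s z + 1)
    (hlen : vs.length = ss.length + 1) (h0 : 0 ∉ crossSphere vs) {δ : ℝ} (hδ : 0 < δ) :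
    ∃ u : List E, u.length = ss.length + 1 ∧ vertices u ⊆ crossSphere vs ∧
      diam (vertices u) < δ ∧ labelCochain ss u ≠ 0 := by
  obtain ⟨v, vs, rfl⟩ := List.exists_cons_of_length_eq_add_one hlen
  obtain ⟨m, hm⟩ : ∃ m : ℕ, (1 - ((ss.length + 1 : ℕ) : ℝ)⁻¹) ^ m *
      diam (crossSphere (v :: vs)) < δ := by
    have htendsto := tendsto_pow_atTop_nhds_zero_of_lt_one
      (sub_nonneg.2 (Nat.cast_inv_le_one (α := ℝ) (ss.length + 1)))
      (sub_lt_self 1 (by positivity))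
    exact ((htendsto.mul_const _).eventually (gt_mem_nhds (by simpa using hδ))).exists
  by_contra! hzero
  have hsum : hemisphereSum v vs ((subdivide (ss.length + 1) ^ m) (labelCochain ss)) =
      hemisphereSum v vs ((subdivide (ss.length + 1) ^ m) 0) :=
    hemisphereSum_subdivide_pow_congr hlen m fun u hu hu_sphere hudiam =>
      hzero u hu hu_sphere (hudiam.trans_lt hm)
  rw [hemisphereSum_subdivide_labelCochain hodd (by simpa using hlen) h0, map_zero,
    hemisphereSum, map_zero, ← map_zero coboundary, sphereSum_coboundary] at hsum
  exact one_ne_zero hsum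

end NormedSpace

variable {E : Type*} [NormedAddCommGroup E] [InnerProductSpace ℝ E]

open scoped RealInnerProductSpace

lemma mem_of_mem_signings {p : Submodule ℝ E} {vs w : List E} (hvs : ∀ x ∈ vs, x ∈ p)
    (hw : w ∈ signings vs) : ∀ x ∈ w, x ∈ p := by
  induction vs generalizing w with
  | nil => simp_all [signings]
  | cons v vs ih =>
    rw [List.forall_mem_cons] at hvs
    simp only [signings, List.mem_append, List.mem_map] at hw
    obtain ⟨u, hu, rfl⟩ | ⟨u, hu, rfl⟩ := hw
    · exact List.forall_mem_cons.2 ⟨hvs.1, ih hvs.2 hu⟩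
    · exact List.forall_mem_cons.2 ⟨p.neg_mem hvs.1, ih hvs.2 hu⟩

lemma inner_sum_pos_of_mem_signings {vs w : List E} (horth : vs.Pairwise (⟪·, ·⟫ = 0))
    (hne : 0 ∉ vs) (hw : w ∈ signings vs) : ∀ x ∈ w, 0 < ⟪x, w.sum⟫ := by
  induction vs generalizing w with
  | nil => simp_all [signings]
  | cons v vs ih =>
    rw [List.pairwise_cons] at horth
    rw [List.mem_cons, not_or] at hne
    have hcons : ∀ a, a = v ∨ a = -v → ∀ u ∈ signings vs, ∀ x ∈ a :: u, 0 < ⟪x, (a :: u).sum⟫ := by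
      intro a ha u hu
      have hu_orth : ∀ x ∈ u, x ∈ (ℝ ∙ a)ᗮ := mem_of_mem_signings (fun x hx => by
        rw [Submodule.mem_orthogonal_singleton_iff_inner_right]
        rcases ha with rfl | rfl <;> simp [horth.1 x hx]) hu
      have ha0 : a ≠ 0 := by rcases ha with rfl | rfl <;> simp [Ne.symm hne.1]
      refine List.forall_mem_cons.2 ⟨?_, fun x hx => ?_⟩
      · rw [List.sum_cons, inner_add_right, Submodule.mem_orthogonal_singleton_iff_inner_right.1
          (list_sum_mem hu_orth), add_zero]
        exact real_inner_self_pos.2 ha0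
      · rw [List.sum_cons, inner_add_right, Submodule.mem_orthogonal_singleton_iff_inner_left.1
          (hu_orth x hx), zero_add]
        exact ih horth.2 hne.2 hu x hx
    simp only [signings, List.mem_append, List.mem_map] at hw
    obtain ⟨u, hu, rfl⟩ | ⟨u, hu, rfl⟩ := hw
    · exact hcons v (.inl rfl) u hu
    · exact hcons (-v) (.inr rfl) u hu

lemma zero_notMem_crossSphere {vs : List E} (horth : vs.Pairwise (⟪·, ·⟫ = 0))
    (hne : 0 ∉ vs) : 0 ∉ crossSphere vs := fun h0 => by
  obtain ⟨w, hw, h0⟩ := Set.mem_iUnion₂.1 h0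
  have hpos : (0 : E) ∈ {x | 0 < ⟪x, w.sum⟫} :=
    convexHull_min (inner_sum_pos_of_mem_signings horth hne hw)
      (convex_halfSpace_gt ((innerₛₗ ℝ).flip w.sum).isLinear 0) h0
  simp at hpos

lemma exists_pairwise_orthogonal_list {n : ℕ} (hn : n ≤ Module.finrank ℝ E) :
    ∃ vs : List E, vs.length = n ∧ vs.Pairwise (⟪·, ·⟫ = 0) ∧ 0 ∉ vs := by
  rcases n.eq_zero_or_pos with rfl | hpos
  · exact ⟨[], by simp⟩
  have : FiniteDimensional ℝ E := .of_finrank_pos (hpos.trans_le hn)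
  let b := stdOrthonormalBasis ℝ E
  refine ⟨List.ofFn fun i : Fin n => b (i.castLE hn), List.length_ofFn, ?_, ?_⟩
  · exact List.pairwise_ofFn.2 fun i j hij => b.orthonormal.2 (by simpa using hij.ne)
  · rw [List.mem_ofFn]
    exact fun ⟨i, hi⟩ => b.orthonormal.ne_zero _ hi

lemma exists_pos_forall_subset_or_subset_compl {X ι : Type*} [PseudoMetricSpace X] {A : ι → Set X}
    {K : Set X} (hK : IsCompact K) (hA : ∀ z ∈ K, ∃ i, z ∉ frontier (A i)) :
    ∃ δ > 0, ∀ S ⊆ K, S.Nonempty → diam S < δ → ∃ i, S ⊆ A i ∨ S ⊆ (A i)ᶜ := by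
  let c : ι ⊕ ι → Set X := Sum.elim (fun i => interior (A i)) fun i => interior (A i)ᶜ
  have hc : ∀ k, IsOpen (c k) := Sum.rec (fun _ => isOpen_interior) fun _ => isOpen_interior
  have hcover : K ⊆ ⋃ k, c k := fun z hz => by
    obtain ⟨i, hi⟩ := hA z hz
    rw [← Set.mem_compl_iff, compl_frontier_eq_union_interior] at hi
    exact Set.mem_iUnion.2 (hi.elim (⟨.inl i, ·⟩) (⟨.inr i, ·⟩))
  obtain ⟨δ, hδ, hball⟩ := lebesgue_number_lemma_of_metric hK hc hcover
  refine ⟨δ, hδ, fun S hSK ⟨z, hz⟩ hdiam => ?_⟩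
  have hS : S ⊆ ball z δ := fun y hy =>
    (dist_le_diam_of_mem (hK.isBounded.subset hSK) hy hz).trans_lt hdiam
  obtain ⟨i | i, hi⟩ := hball z (hSK hz)
  · exact ⟨i, .inl (hS.trans (hi.trans interior_subset))⟩
  · exact ⟨i, .inr (hS.trans (hi.trans interior_subset))⟩

variable {ι : Type*} [Fintype ι]

theorem exists_forall_mem_frontier_of_antipodal (hι : Fintype.card ι < Module.finrank ℝ E)
    {A : ι → Set E} (hA : ∀ i, ∀ z ≠ 0, -z ∈ A i ↔ z ∉ A i) :
    ∃ z ≠ 0, ∀ i, z ∈ frontier (A i) := by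
  let label (i : ι) : E → ZMod 2 := (A i).indicator 1
  have hodd : ∀ s ∈ Finset.univ.toList.map label, ∀ z ≠ 0, s (-z) = s z + 1 := by
    simp only [List.mem_map, forall_exists_index, and_imp, forall_apply_eq_imp_iff₂]
    intro i _ z hz
    by_cases hzi : z ∈ A i <;> simp [label, hA i z hz, hzi, CharTwo.add_self_eq_zero]
  obtain ⟨vs, hlen, horth, hne⟩ := exists_pairwise_orthogonal_list (E := E) hι
  have h0 : 0 ∉ crossSphere vs := zero_notMem_crossSphere horth hne
  by_contra! hfrontier
  obtain ⟨δ, hδ, hsplit⟩ := exists_pos_forall_subset_or_subset_compl (isCompact_crossSphere vs)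
    fun z hz => hfrontier z (ne_of_mem_of_not_mem hz h0)
  obtain ⟨u, hu, hu_sphere, hudiam, hu_ne⟩ :=
    exists_labelCochain_ne_zero hodd (by simpa using hlen) h0 hδ
  have hu_nonempty : (vertices u).Nonempty := List.exists_mem_of_length_pos (by lia)
  obtain ⟨i, hi⟩ := hsplit _ hu_sphere hu_nonempty hudiam
  refine hu_ne (labelCochain_eq_zero
    (List.mem_map_of_mem (Finset.mem_toList.2 (Finset.mem_univ i))) hu fun x hx y hy => ?_)
  rcases hi with hi | hi
  · exact (Set.indicator_of_mem (hi hx) 1).trans (Set.indicator_of_mem (hi hy) 1).symm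
  · exact (Set.indicator_of_notMem (hi hx) 1).trans (Set.indicator_of_notMem (hi hy) 1).symm

lemma eq_zero_of_mem_frontier {X : Type*} [TopologicalSpace X] {A : Set X} {g : X → ℝ}
    (hg : Continuous g) (hpos : ∀ z, 0 < g z → z ∈ A) (hneg : ∀ z, g z < 0 → z ∉ A) {z : X}
    (hz : z ∈ frontier A) : g z = 0 := by
  by_contra hne
  rcases lt_or_gt_of_ne hne with h | h
  · exact (frontier_compl A ▸ hz).2 (mem_interior.2
      ⟨{z | g z < 0}, hneg, isOpen_lt hg continuous_const, h⟩)
  · exact hz.2 (mem_interior.2 ⟨{z | 0 < g z}, hpos, isOpen_lt continuous_const hg, h⟩)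

theorem borsuk_ulam (hι : Fintype.card ι < Module.finrank ℝ E) {g : E → ι → ℝ}
    (hg : Continuous g) (hodd : g.Odd) : ∃ z ≠ 0, g z = 0 := by
  -- The zeros of `gᵢ` are split between antipodes by an arbitrary linear order.
  let A (i : ι) : Set E := {z | 0 < g z i ∨ g z i = 0 ∧ WellOrderingRel z (-z)}
  have hA : ∀ i, ∀ z ≠ 0, -z ∈ A i ↔ z ∉ A i := fun i z hz => by
    have : IsAddTorsionFree E := .of_isTorsionFree ℝ E
    have horder : WellOrderingRel (-z) z ↔ ¬WellOrderingRel z (-z) :=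
      ⟨fun h h' => asymm h h', fun h => (trichotomous_of WellOrderingRel z (-z)).elim
        (absurd · h) (Or.resolve_left · fun h => hz (self_eq_neg.1 h))⟩
    simp only [A, Set.mem_ofPred_eq, hodd z, Pi.neg_apply, neg_neg, neg_eq_zero, horder]
    grind
  obtain ⟨z, hz, hfrontier⟩ := exists_forall_mem_frontier_of_antipodal hι hA
  refine ⟨z, hz, funext fun i => ?_⟩
  refine eq_zero_of_mem_frontier (continuous_pi_iff.1 hg i) (fun y hy => .inl hy)
    (fun y hy => ?_) (hfrontier i)
  rintro (h | ⟨h, -⟩) <;> linarith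

end BorsukUlam

section Complementarity

lemma posPart_mul_negPart (a : ℝ) : a⁺ * a⁻ = 0 := by
  rcases le_total 0 a with ha | ha
  · rw [negPart_eq_zero.2 ha, mul_zero]
  · rw [posPart_eq_zero.2 ha, zero_mul]

lemma mul_negPart_eq_zero_of_posPart_eq_add {u p r : ℝ} (hu : 0 ≤ u) (hr : 0 ≤ r)
    (h : p⁺ = r + u * p⁻) : u * p⁻ = 0 := by
  rcases le_total 0 p with hp | hp
  · rw [negPart_eq_zero.2 hp, mul_zero]
  · rw [posPart_eq_zero.2 hp] at h
    linarith [mul_nonneg hu (negPart_nonneg p)]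

lemma complementarity_of_balance {u v p q : ℝ} (hu : 0 ≤ u) (hv : 0 ≤ v) (huv : u * v = 0)
    (h : p⁺ - q⁺ - u * p⁻ + v * q⁻ = 0) : p⁺ = q⁺ ∧ u * p⁻ = 0 ∧ v * q⁻ = 0 := by
  rcases mul_eq_zero.1 huv with rfl | rfl
  · have hvq := mul_negPart_eq_zero_of_posPart_eq_add hv (posPart_nonneg p)
      (by linarith : q⁺ = p⁺ + v * q⁻)
    exact ⟨by linarith, zero_mul _, hvq⟩
  · have hup := mul_negPart_eq_zero_of_posPart_eq_add hu (posPart_nonneg q)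
      (by linarith : p⁺ = q⁺ + u * p⁻)
    exact ⟨by linarith, hup, zero_mul _⟩

lemma exists_complementary_pair {ι κ : Type*} [Fintype ι] [Fintype κ]
    (hcard : Fintype.card ι < Fintype.card κ) (e : ι → κ) {P : (κ → ℝ) → ι → ℝ}
    (hP : Continuous P) :
    ∃ z : κ → ℝ, z ≠ 0 ∧ ∀ i, (P z⁺ i)⁺ = (P z⁻ i)⁺ ∧
      (z (e i))⁺ * (P z⁺ i)⁻ = 0 ∧ (z (e i))⁻ * (P z⁻ i)⁻ = 0 := by
  let ofLp : EuclideanSpace ℝ κ → κ → ℝ := WithLp.ofLp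
  have hz : Continuous ofLp := PiLp.continuous_ofLp 2 _
  let g : EuclideanSpace ℝ κ → ι → ℝ := fun z i => (P (ofLp z)⁺ i)⁺ - (P (ofLp z)⁻ i)⁺ -
    (z (e i))⁺ * (P (ofLp z)⁺ i)⁻ + (z (e i))⁻ * (P (ofLp z)⁻ i)⁻
  have hg : Continuous g := by
    have hpos : Continuous fun a : ℝ => a⁺ := continuous_posPart
    have hneg : Continuous fun a : ℝ => a⁻ := continuous_negPart
    have hz_at (k : κ) : Continuous fun z => ofLp z k := (continuous_apply k).comp hz
    have hP_pos (i : ι) : Continuous fun z => P (ofLp z)⁺ i :=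
      (continuous_apply i).comp (hP.comp (continuous_pi fun k => hpos.comp (hz_at k)))
    have hP_neg (i : ι) : Continuous fun z => P (ofLp z)⁻ i :=
      (continuous_apply i).comp (hP.comp (continuous_pi fun k => hneg.comp (hz_at k)))
    exact continuous_pi fun i => (((hpos.comp (hP_pos i)).sub (hpos.comp (hP_neg i))).sub
      ((hpos.comp (hz_at _)).mul (hneg.comp (hP_pos i)))).add
        ((hneg.comp (hz_at _)).mul (hneg.comp (hP_neg i)))
  have hg_odd : g.Odd := fun z => funext fun i => by
    have hneg : ofLp (-z) = -ofLp z := rfl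
    simp only [g, hneg, posPart_neg, negPart_neg, PiLp.neg_apply, Pi.neg_apply]
    ring
  obtain ⟨z, hz, hgz⟩ := borsuk_ulam (by simpa using hcard) hg hg_odd
  refine ⟨ofLp z, fun h => hz (PiLp.ext (congrFun h)), fun i => ?_⟩
  exact complementarity_of_balance (posPart_nonneg _) (negPart_nonneg _) (posPart_mul_negPart _)
    (congrFun hgz i)

end Complementarity

section Assignment

variable {ι : Type*} [Fintype ι] {s : Option ι → Fin 4} {T : ι → Finset (Fin 4)} {i : ι}
  {o : Option ι} {j : Fin 4}

/-- The `j`-th of four faces on the vertex set `Option ι ⊕ ι`, whose vertices are coloured by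
`Option ι` via `Sum.elim id some`: the vertex `inl o` is put into the face `s o`, and `inr i` into
the faces in `T i`. -/
def face (s : Option ι → Fin 4) (T : ι → Finset (Fin 4)) (j : Fin 4) : Finset (Option ι ⊕ ι) :=
  ({o | s o = j} : Finset (Option ι)).disjSum {i | j ∈ T i}

@[simp] lemma inl_mem_face : .inl o ∈ face s T j ↔ s o = j := by simp [face]

@[simp] lemma inr_mem_face : .inr i ∈ face s T j ↔ j ∈ T i := by simp [face]

lemma injOn_color_face (hsT : ∀ i, s (some i) ∉ T i) (j : Fin 4) :
    Set.InjOn (Sum.elim id some) (face s T j : Set (Option ι ⊕ ι)) := by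
  rintro (o | i) hk (o' | i') hk' h
  · exact congrArg Sum.inl h
  · obtain rfl : o = some i' := h
    exact (hsT i' (inl_mem_face.1 hk ▸ inr_mem_face.1 hk')).elim
  · obtain rfl : some i = o' := h
    exact (hsT i (inl_mem_face.1 hk' ▸ inr_mem_face.1 hk)).elim
  · exact congrArg Sum.inr (Option.some_injective ι h)

lemma card_filter_inl_mem_face (s : Option ι → Fin 4) (T : ι → Finset (Fin 4)) (o : Option ι) :
    Finset.card {j | .inl o ∈ face s T j} = 1 := by
  simp [Finset.filter_eq]

lemma card_filter_inr_mem_face (s : Option ι → Fin 4) (T : ι → Finset (Fin 4)) (i : ι) :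
    Finset.card {j | .inr i ∈ face s T j} = (T i).card := by
  simp

lemma exists_slots_of_complementary {u v p q r : ℝ} (huv : u * v = 0) (hup : u * p = 0)
    (hvq : v * q = 0) (hrp : r * p = 0) (hrq : r * q = 0) :
    ∃ (s : Fin 4) (T : Finset (Fin 4)), s ∉ T ∧ T.card = 2 ∧
      ∀ j, (![u, v, 0, 0] j ≠ 0 → s = j) ∧ (![p, q, r, r] j ≠ 0 → j ∈ T) := by
  by_cases hr : r = 0
  · by_cases hu : u = 0
    · by_cases hv : v = 0
      · exact ⟨2, {0, 1}, by decide, by decide, by simp [Fin.forall_fin_succ, *]⟩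
      · have hq : q = 0 := by simp_all
        exact ⟨1, {0, 2}, by decide, by decide, by simp [Fin.forall_fin_succ, *]⟩
    · have hp : p = 0 := by simp_all
      have hv : v = 0 := by simp_all
      exact ⟨0, {1, 2}, by decide, by decide, by simp [Fin.forall_fin_succ, *]⟩
  · have hp : p = 0 := by simp_all
    have hq : q = 0 := by simp_all
    by_cases hu : u = 0
    · exact ⟨1, {2, 3}, by decide, by decide, by simp [Fin.forall_fin_succ, *]⟩
    · have hv : v = 0 := by simp_all
      exact ⟨0, {2, 3}, by decide, by decide, by simp [Fin.forall_fin_succ, *]⟩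

end Assignment

section Hulls

variable {E : Type*} [AddCommGroup E] [Module ℝ E]

lemma iInter_convexHull_image_nonempty {η κ : Type*} [Fintype κ] {x : κ → E} {w : η → κ → ℝ}
    {S : η → Set κ} {t : ℝ} {q : E} (hw : ∀ j k, 0 ≤ w j k) (hS : ∀ j k, w j k ≠ 0 → k ∈ S j)
    (ht : 0 < t) (hsum : ∀ j, ∑ k, w j k = t) (hq : ∀ j, ∑ k, w j k • x k = q) :
    (⋂ j, convexHull ℝ (x '' S j)).Nonempty := by
  refine ⟨t⁻¹ • q, Set.mem_iInter.2 fun j => ?_⟩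
  have hcenter : t⁻¹ • q = Finset.univ.centerMass (w j) x := by
    rw [Finset.centerMass, hsum, hq]
  rw [hcenter, ← Finset.centerMass_filter_ne_zero]
  refine Finset.centerMass_mem_convexHull _ (fun k _ => hw j k) ?_ fun k hk =>
    Set.mem_image_of_mem x (hS j k (Finset.mem_filter.1 hk).2)
  rwa [Finset.sum_filter_ne_zero, hsum]

variable {ι κ : Type*} [Fintype κ] (c : AffineBasis ι ℝ E) (a : κ → E)

/-- The coefficients with respect to the affine basis `c` of the weighted points `u k • a k`. -/
noncomputable def coeff (u : κ → ℝ) (i : ι) : ℝ := ∑ k, u k * c.coord i (a k)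

lemma continuous_coeff : Continuous (coeff c a) := by
  unfold coeff
  fun_prop

/-- Moving the negative coefficients of the points `u k • a k` to the other side turns them into
nonnegative weights on the points `a k` and `c i`. -/
noncomputable def weight (u : κ → ℝ) : κ ⊕ ι → ℝ := Sum.elim u fun i => (coeff c a u i)⁻

lemma weight_nonneg {u : κ → ℝ} (hu : 0 ≤ u) (k : κ ⊕ ι) : 0 ≤ weight c a u k :=
  k.rec hu fun _ => negPart_nonneg _

variable [Fintype ι]

lemma sum_coeff (u : κ → ℝ) : ∑ i, coeff c a u i = ∑ k, u k := by
  simp_rw [coeff]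
  rw [Finset.sum_comm]
  simp_rw [← Finset.mul_sum, c.sum_coord_apply_eq_one, mul_one]

lemma sum_coeff_smul (u : κ → ℝ) : ∑ i, coeff c a u i • c i = ∑ k, u k • a k := by
  simp_rw [coeff, Finset.sum_smul]
  rw [Finset.sum_comm]
  simp_rw [mul_smul, ← Finset.smul_sum, c.linear_combination_coord_eq_self]

lemma sum_weight (u : κ → ℝ) : ∑ k, weight c a u k = ∑ i, (coeff c a u i)⁺ := by
  rw [Fintype.sum_sum_type, weight]
  simp only [Sum.elim_inl, Sum.elim_inr]
  rw [← sum_coeff c a u, ← Finset.sum_add_distrib]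
  exact Finset.sum_congr rfl fun i _ => by linarith [posPart_sub_negPart (coeff c a u i)]

lemma sum_weight_smul (u : κ → ℝ) :
    ∑ k, weight c a u k • Sum.elim a c k = ∑ i, (coeff c a u i)⁺ • c i := by
  rw [Fintype.sum_sum_type]
  simp only [weight, Sum.elim_inl, Sum.elim_inr]
  rw [← sum_coeff_smul c a u, ← Finset.sum_add_distrib]
  exact Finset.sum_congr rfl fun i _ => by
    rw [← add_smul, eq_add_of_sub_eq (posPart_sub_negPart (coeff c a u i))]

/-- The four faces assigned by `s` and `T` satisfy the conclusion of the colored Tverberg theorem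
for the vertex positions `x`. -/
structure IsTverbergAssignment (x : Option ι ⊕ ι → E) (s : Option ι → Fin 4)
    (T : ι → Finset (Fin 4)) : Prop where
  notMem (i : ι) : s (some i) ∉ T i
  card_eq_two (i : ι) : (T i).card = 2
  iInter_nonempty : (⋂ j, convexHull ℝ (x '' face s T j)).Nonempty

lemma exists_isTverbergAssignment_of_not_affineIndependent {x : Option ι ⊕ ι → E}
    (hx : ¬AffineIndependent ℝ (x ∘ .inr)) :
    ∃ s T, IsTverbergAssignment x s T := by
  obtain ⟨I, p, hp, hp'⟩ := Convex.radon_partition hx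
  let s (o : Option ι) : Fin 4 := o.elim 0 fun i => if i ∈ I then 2 else 0
  let T (i : ι) : Finset (Fin 4) := if i ∈ I then {0, 1} else {2, 3}
  have hI : ∀ j ≤ 1, (x ∘ .inr) '' I ⊆ x '' face s T j := by
    rintro j hj _ ⟨i, hi, rfl⟩
    exact ⟨.inr i, by simp [T, hi]; lia, rfl⟩
  have hIc : ∀ j > 1, (x ∘ .inr) '' Iᶜ ⊆ x '' face s T j := by
    rintro j hj _ ⟨i, hi, rfl⟩
    exact ⟨.inr i, by simp_all [T]; lia, rfl⟩
  refine ⟨s, T, fun i => ?_, fun i => ?_, p, Set.mem_iInter.2 fun j => ?_⟩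
  · by_cases hi : i ∈ I <;> simp [s, T, hi]
  · by_cases hi : i ∈ I <;> simp [T, hi]
  · rcases le_or_gt j 1 with hj | hj
    · exact convexHull_mono (hI j hj) hp
    · exact convexHull_mono (hIc j hj) hp'

lemma sum_posPart_coeff_pos {z : κ → ℝ} (hz : z ≠ 0)
    (hbal : ∀ i, (coeff c a z⁺ i)⁺ = (coeff c a z⁻ i)⁺) : 0 < ∑ i, (coeff c a z⁺ i)⁺ := by
  have hzero : ∀ u : κ → ℝ, 0 ≤ u → ∑ i, (coeff c a u i)⁺ = 0 → u = 0 := fun u hu h => by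
    rw [← sum_weight, Finset.sum_eq_zero_iff_of_nonneg fun k _ => weight_nonneg c a hu k] at h
    exact funext fun k => h (.inl k) (Finset.mem_univ _)
  refine (Finset.sum_nonneg fun i _ => posPart_nonneg _).lt_of_ne' fun h => hz ?_
  rw [← posPart_sub_negPart z, hzero _ (posPart_nonneg z) h,
    hzero _ (negPart_nonneg z) ((Finset.sum_congr rfl fun i _ => (hbal i).symm).trans h), sub_zero]

lemma exists_isTverbergAssignment_of_affineBasis (a : Option ι → E) :
    ∃ s T, IsTverbergAssignment (Sum.elim a c) s T := by
  obtain ⟨z, hz, hcomp⟩ := exists_complementary_pair (by simp) some (continuous_coeff c a)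
  choose hbal hpos hneg using hcomp
  let r (i : ι) : ℝ := (coeff c a z⁺ i)⁺
  have hr : 0 < ∑ i, r i := sum_posPart_coeff_pos c a hz hbal
  obtain ⟨s₀, _, -, -, hs₀⟩ := exists_slots_of_complementary (p := 0) (q := 0) (r := 0)
    (posPart_mul_negPart (z none)) (by simp) (by simp) (by simp) (by simp)
  choose s T hsT hT hslots using fun i => exists_slots_of_complementary
    (posPart_mul_negPart (z (some i))) (hpos i) (hneg i)
    (posPart_mul_negPart (coeff c a z⁺ i)) (hbal i ▸ posPart_mul_negPart (coeff c a z⁻ i))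
  let w (j : Fin 4) : Option ι ⊕ ι → ℝ := Sum.elim (fun o => ![(z o)⁺, (z o)⁻, 0, 0] j) fun i =>
    ![(coeff c a z⁺ i)⁻, (coeff c a z⁻ i)⁻, r i, r i] j
  refine ⟨fun o => o.elim s₀ s, T, hsT, hT, iInter_convexHull_image_nonempty (w := w)
    (q := ∑ i, r i • c i) ?_ ?_ hr ?_ ?_⟩
  · exact fun
      | 0 => weight_nonneg c a (posPart_nonneg z)
      | 1 => weight_nonneg c a (negPart_nonneg z)
      | 2 | 3 => Sum.rec (fun _ => le_rfl) fun _ => posPart_nonneg _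
  · rintro j ((_ | i) | i) hw
    · exact inl_mem_face.2 ((hs₀ j).1 hw)
    · exact inl_mem_face.2 ((hslots i j).1 hw)
    · exact inr_mem_face.2 ((hslots i j).2 hw)
  · exact fun
      | 0 => sum_weight c a z⁺
      | 1 => (sum_weight c a z⁻).trans (Finset.sum_congr rfl fun i _ => (hbal i).symm)
      | 2 | 3 => by simp [w]
  · exact fun
      | 0 => sum_weight_smul c a z⁺
      | 1 => (sum_weight_smul c a z⁻).trans (Finset.sum_congr rfl fun i _ => by rw [← hbal i])
      | 2 | 3 => by simp [w]

lemma exists_isTverbergAssignment [FiniteDimensional ℝ E]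
    (hι : Module.finrank ℝ E < Fintype.card ι) (x : Option ι ⊕ ι → E) :
    ∃ s T, IsTverbergAssignment x s T := by
  by_cases hind : AffineIndependent ℝ (x ∘ .inr)
  · have hspan : affineSpan ℝ (Set.range (x ∘ .inr)) = ⊤ :=
      hind.affineSpan_eq_top_iff_card_eq_finrank_add_one.2 <|
        (hind.card_le_finrank_succ.trans (Nat.succ_le_succ (Submodule.finrank_le _))).antisymm hι
    let c : AffineBasis ι ℝ E := ⟨x ∘ .inr, hind, hspan⟩
    have hx : Sum.elim (x ∘ .inl) c = x := Sum.elim_comp_inl_inr x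
    exact hx ▸ exists_isTverbergAssignment_of_affineBasis c (x ∘ .inl)
  · exact exists_isTverbergAssignment_of_not_affineIndependent hind

end Hulls

section SevenPoints

/-- The seven vertices as the vertex set `Option ι ⊕ ι` of `face` for three double vertices:
`inl` for `a₁, b₁, c₁, d` and `inr` for `a₂, b₂, c₂`. -/
def sevenVertex : Option (Fin 3) ⊕ Fin 3 ↪ Fin 7 where
  toFun
    | .inl (some 0) => 0
    | .inr 0 => 1
    | .inl (some 1) => 2
    | .inr 1 => 3
    | .inl (some 2) => 4
    | .inr 2 => 5
    | .inl none => 6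
  inj' := by decide

lemma color_eq_of_mem_colorClass7 : ∀ {c k l}, sevenVertex k ∈ colorClass7 c →
    sevenVertex l ∈ colorClass7 c → Sum.elim id some k = Sum.elim id some l := by
  decide

lemma exists_sevenVertex_inl : ∀ {v : Fin 7}, v ∈ ({0, 2, 4, 6} : Finset (Fin 7)) →
    ∃ o, sevenVertex (.inl o) = v := by
  decide

lemma exists_sevenVertex_inr : ∀ {v : Fin 7}, v ∈ ({1, 3, 5} : Finset (Fin 7)) →
    ∃ i, sevenVertex (.inr i) = v := by
  decide

lemma card_map_sevenVertex_inter_colorClass7_le_one {Δ : Finset (Option (Fin 3) ⊕ Fin 3)}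
    (hΔ : Set.InjOn (Sum.elim id some) (Δ : Set (Option (Fin 3) ⊕ Fin 3))) (c : Fin 4) :
    (Δ.map sevenVertex ∩ colorClass7 c).card ≤ 1 := by
  refine Finset.card_le_one.2 fun v hv v' hv' => ?_
  simp only [Finset.mem_inter, Finset.mem_map] at hv hv'
  obtain ⟨⟨k, hk, rfl⟩, hkc⟩ := hv
  obtain ⟨⟨l, hl, rfl⟩, hlc⟩ := hv'
  exact congrArg sevenVertex (hΔ hk hl (color_eq_of_mem_colorClass7 hkc hlc))

end SevenPoints

end ColoredTverberg

open ColoredTverberg in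
/-- The vertices are coloured by `Option ι` via `Sum.elim id some`. Those of the form `inr i` are
the double ones, one in each colour class except that of `none`. -/
theorem affine_multiple_colored_tverberg_general {ι E : Type*} [Fintype ι] [AddCommGroup E]
    [Module ℝ E] [FiniteDimensional ℝ E] (hι : Module.finrank ℝ E < Fintype.card ι)
    (x : Option ι ⊕ ι → E) :
    ∃ Δ : Fin 4 → Finset (Option ι ⊕ ι),
      (∀ j, Set.InjOn (Sum.elim id some) (Δ j : Set (Option ι ⊕ ι))) ∧
      (⋂ j, convexHull ℝ (x '' Δ j)).Nonempty ∧
      (∀ o, Finset.card {j | .inl o ∈ Δ j} = 1) ∧ (∀ i, Finset.card {j | .inr i ∈ Δ j} = 2) := by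
  obtain ⟨s, T, h⟩ := exists_isTverbergAssignment hι x
  exact ⟨face s T, injOn_color_face h.notMem, h.iInter_nonempty, card_filter_inl_mem_face s T,
    fun i => (card_filter_inr_mem_face s T i).trans (h.card_eq_two i)⟩

/-- **Affine multiple colored Tverberg theorem** (Corollary 1.6/`cor:seven-points`).
For any `7` points in the plane colored by `4` colors with classes
`A = {a₁,a₂}`, `B = {b₁,b₂}`, `C = {c₁,c₂}`, `D = {d}` (equivalently, any affine map
from the `6`-simplex, determined by the images `x i` of the vertices), there exist four
rainbow subsets `Δ 0, Δ 1, Δ 2, Δ 3` of the vertex set whose convex hulls of images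
have a common point, such that each of `a₁, b₁, c₁, d` lies in exactly one of the `Δ i`
and each of `a₂, b₂, c₂` lies in exactly two of them. -/
theorem affine_multiple_colored_tverberg (x : Fin 7 → EuclideanSpace ℝ (Fin 2)) :
    ∃ Δ : Fin 4 → Finset (Fin 7),
      -- each Δ i is a rainbow set: at most one vertex of each color class
      (∀ i : Fin 4, ∀ c : Fin 4, (Δ i ∩ colorClass7 c).card ≤ 1) ∧
      -- the convex hulls of the four image sets have a common point
      (∃ p : EuclideanSpace ℝ (Fin 2),
        ∀ i : Fin 4, p ∈ convexHull ℝ (x '' (Δ i : Set (Fin 7)))) ∧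
      -- a₁, b₁, c₁, d each appear in exactly one of the Δ i
      (∀ v : Fin 7, v ∈ ({0, 2, 4, 6} : Finset (Fin 7)) →
        (Finset.univ.filter fun i : Fin 4 => v ∈ Δ i).card = 1) ∧
      -- a₂, b₂, c₂ each appear in exactly two of the Δ i
      (∀ v : Fin 7, v ∈ ({1, 3, 5} : Finset (Fin 7)) →
        (Finset.univ.filter fun i : Fin 4 => v ∈ Δ i).card = 2) := by
  obtain ⟨Δ, hrainbow, ⟨p, hp⟩, hsingle, hdouble⟩ :=
    affine_multiple_colored_tverberg_general (by simp) (x ∘ ColoredTverberg.sevenVertex)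
  refine ⟨fun j => (Δ j).map ColoredTverberg.sevenVertex, fun j c =>
    ColoredTverberg.card_map_sevenVertex_inter_colorClass7_le_one (hrainbow j) c,
    ⟨p, fun j => ?_⟩, fun v hv => ?_, fun v hv => ?_⟩
  · simpa [← Set.image_comp] using Set.mem_iInter.1 hp j
  · obtain ⟨o, rfl⟩ := ColoredTverberg.exists_sevenVertex_inl hv
    simp only [Finset.mem_map']
    convert hsingle o
  · obtain ⟨i, rfl⟩ := ColoredTverberg.exists_sevenVertex_inr hv
    simp only [Finset.mem_map']
    convert hdouble i
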